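/- Let R = B_q(α,δ,b) be a Reed–Solomon code of length r (that is, a univariate BCH code in A_q(r) with r = q − 1, designed distance δ and defining set the union of the q-cyclotomic cosets of \overline{b},…,\overline{b+δ−2} modulo r). Then, for each positive integer n with gcd(n,q) = 1 and each α' ∈ U_n, the multivariate BCH code C = B_q((α',α),{2},{δ},{b}) in A_q(n,r) satisfies dim_{F_q}(C) = (r − δ + 1)·n = n·dim_{F_q}(R) and d_{(α',α)}*(C) = δ. -/

import Mathlib

open Classical

noncomputable section

namespace AbelianCodes

/-- The index set `I = Z_{r 0} × ⋯ × Z_{r (s-1)}`. -/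
abbrev Idx {s : ℕ} (r : Fin s → ℕ) : Type := ∀ k, ZMod (r k)

variable {F : Type*} [Field F]

/-- The support of a hypermatrix. -/
def hsupp {s : ℕ} {r : Fin s → ℕ} (M : Idx r → F) : Set (Idx r) := {i | M i ≠ 0}

/-- The hypercolumn `H_M(k,b)` of a hypermatrix, viewed as an `(s-1)`-dimensional
hypermatrix indexed by `∏_{j ≠ k} Z_{r j}`. -/
def hypercol {s : ℕ} {r : Fin (s+1) → ℕ} (M : Idx r → F) (k : Fin (s+1)) (b : ZMod (r k)) :
    Idx (fun j => r (k.succAbove j)) → F :=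
  fun i => M (k.insertNth b i)

/-- `ω_M(k,b)`: the number of consecutive zero hypercolumns
`H_M(k,b+1), H_M(k,b+2), …` (indices modulo `r k`). -/
def runLen {s : ℕ} {r : Fin (s+1) → ℕ} (M : Idx r → F) (k : Fin (s+1)) (b : ZMod (r k)) : ℕ :=
  ((Finset.Ico 1 (r k)).filter
    (fun j => ∀ m : ℕ, m ∈ Finset.Icc 1 j → hypercol M k (b + (m : ZMod (r k))) = 0)).card

/-- The apparent distance `d*(M)` of a hypermatrix, defined recursively on the
number of variables.  (A `0`-dimensional hypermatrix is a scalar, of apparent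
distance `1` if nonzero and `0` otherwise; with this convention the `1`-dimensional
case becomes `max {ω_M(b)+1 : a_b ≠ 0}` and the higher-dimensional case becomes
`max_k max {(ω_M(k,b)+1)·d*(H_M(k,b)) : H_M(k,b) ≠ 0}`, since zero hypermatrices
have apparent distance `0`.) -/
def apd : {s : ℕ} → (r : Fin s → ℕ) → (Idx r → F) → ℕ
  | 0, _, M => if M finZeroElim = 0 then 0 else 1
  | _+1, r, M =>
      Finset.univ.sup fun k =>
        Finset.univ.sup fun b : Fin (r k) =>
          (runLen M k ((b : ℕ) : ZMod (r k)) + 1) *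
            apd (fun j => r (k.succAbove j)) (hypercol M k ((b : ℕ) : ZMod (r k)))

/-- The `q^t`-orbit `Q_t(a)` of `a ∈ I`. -/
def qOrbit {s : ℕ} (r : Fin s → ℕ) (q t : ℕ) (a : Idx r) : Set (Idx r) :=
  {i | ∃ n : ℕ, ∀ k, i k = (q : ZMod (r k)) ^ (t * n) * a k}

/-- `D` is a union of `q^t`-orbits. -/
def OrbitUnion {s : ℕ} (r : Fin s → ℕ) (q t : ℕ) (D : Set (Idx r)) : Prop :=
  ∀ a ∈ D, qOrbit r q t a ⊆ D

/-- The hypermatrix afforded by `D ⊆ I`: entry `0` at indices in `D`, entry `1` elsewhere. -/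
def afforded {s : ℕ} (r : Fin s → ℕ) (D : Set (Idx r)) : Idx r → F :=
  fun i => if i ∈ D then 0 else 1

/-- `M` is a `q^t`-orbits hypermatrix, i.e. the hypermatrix afforded by some union
of `q^t`-orbits. -/
def IsOrbitMx {s : ℕ} (r : Fin s → ℕ) (q t : ℕ) (M : Idx r → F) : Prop :=
  ∃ D : Set (Idx r), OrbitUnion r q t D ∧ M = afforded r D

/-- The minimum apparent distance `mad(M) = min {d*(P) : P a q^t-orbits hypermatrix,
`0 ≠ P ≤ M`}`, where `P ≤ M` means `supp P ⊆ supp M`. -/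
def mad {s : ℕ} (r : Fin s → ℕ) (q t : ℕ) (M : Idx r → F) : ℕ :=
  sInf {d | ∃ P : Idx r → F, IsOrbitMx r q t P ∧ P ≠ 0 ∧ hsupp P ⊆ hsupp M ∧ apd r P = d}

/-- The `q^t`-cyclotomic coset of `b` modulo `r`. -/
def cycCoset (r q t : ℕ) (b : ZMod r) : Set (ZMod r) :=
  {x | ∃ n : ℕ, x = (q : ZMod r) ^ (t * n) * b}



variable {F : Type*} [Field F] {L : Type*} [Field L] [Algebra F L]

/-- An abelian code: a subspace of the group algebra `F[∏ Z_{r k}]` (identified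
with the space of coefficient functions `I → F`) which is closed under all
translations, i.e. an ideal. -/
def IsAbelianCode {s : ℕ} {r : Fin s → ℕ} (C : Submodule F (Idx r → F)) : Prop :=
  ∀ f ∈ C, ∀ a : Idx r, (fun i => f (i - a)) ∈ C

/-- Convolution: the multiplication of the group algebra in the coefficient
function picture. -/
def conv {s : ℕ} {r : Fin s → ℕ} [∀ k, NeZero (r k)] (f g : Idx r → F) : Idx r → F :=
  fun i => ∑ u : Idx r, f u * g (i - u)

/-- The (discrete) Fourier transform `φ_{α,f}(j) = f(α^j)` of a coefficient
function `f : I → F` with respect to `α`, with values in the extension `L`. -/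
def fourier {s : ℕ} {r : Fin s → ℕ} [∀ k, NeZero (r k)] (α : Fin s → L) (f : Idx r → F) :
    Idx r → L :=
  fun j => ∑ i : Idx r, algebraMap F L (f i) * ∏ k, α k ^ ((i k).val * (j k).val)

/-- The Hamming weight of a codeword. -/
def wt {s : ℕ} {r : Fin s → ℕ} [∀ k, NeZero (r k)] (f : Idx r → F) : ℕ :=
  (Finset.univ.filter fun i : Idx r => f i ≠ 0).card

/-- The minimum distance of a code. -/
def dmin {s : ℕ} {r : Fin s → ℕ} [∀ k, NeZero (r k)] (C : Submodule F (Idx r → F)) : ℕ :=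
  sInf {w | ∃ f ∈ C, f ≠ (0 : Idx r → F) ∧ wt f = w}

/-- The defining set `D_α(C) = {a ∈ I : f(α^a) = 0 for all f ∈ C}`. -/
def defSet {s : ℕ} (r : Fin s → ℕ) [∀ k, NeZero (r k)] (α : Fin s → L)
    (C : Submodule F (Idx r → F)) : Set (Idx r) :=
  {a | ∀ f ∈ C, fourier α f a = 0}

/-- The apparent distance of a code `C` with respect to `α`:
`d_α*(C) = min {d*(M(φ_{α,e})) : 0 ≠ e = e² ∈ C}`. -/
def dStarAlpha {s : ℕ} (r : Fin s → ℕ) [∀ k, NeZero (r k)] (α : Fin s → L)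
    (C : Submodule F (Idx r → F)) : ℕ :=
  sInf {d | ∃ e, e ∈ C ∧ e ≠ (0 : Idx r → F) ∧ conv e e = e ∧ apd r (fourier α e) = d}

/-- The apparent distance of a code: `d*(C) = max {d_β*(C) : β ∈ U}`, where `U`
is the set of tuples of primitive roots of unity in `L`. -/
def dStarCode {s : ℕ} (r : Fin s → ℕ) [∀ k, NeZero (r k)] (L : Type*) [Field L] [Algebra F L]
    (C : Submodule F (Idx r → F)) : ℕ :=
  sSup {d | ∃ α : Fin s → L, (∀ k, IsPrimitiveRoot (α k) (r k)) ∧ dStarAlpha r α C = d}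

/-- The defining set of the multivariate BCH code `B_q(α,γ,δ,b)`:
`∪_{k∈γ} ∪_{l=0}^{δ_k−2} ∪_{i ∈ I(k, b_k+l)} Q(i)`. -/
def bchDefSet {s : ℕ} (r : Fin s → ℕ) (q : ℕ) (γ : Finset (Fin s)) (δ b : Fin s → ℕ) :
    Set (Idx r) :=
  ⋃ k ∈ γ, ⋃ l ∈ Finset.range (δ k - 1),
    ⋃ i ∈ {i : Idx r | i k = ((b k + l : ℕ) : ZMod (r k))}, qOrbit r q 1 i


theorem aux_finrank_ext {K E ι : Type*} [Field K] [Field E] [Algebra K E] [Fintype ι]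
    (C : Submodule K (ι → K)) :
    Module.finrank E (Submodule.span E ((fun (f : ι → K) i => algebraMap K E (f i)) '' (C : Set (ι → K))))
      = Module.finrank K C := by
  classical
  let v := Module.finBasis K C
  have hli : LinearIndependent K (fun k => ((v k : C) : ι → K)) :=
    v.linearIndependent.map' C.subtype C.ker_subtype
  obtain ⟨g, hg⟩ := LinearMap.exists_leftInverse_of_injective
    (Fintype.linearCombination K (fun k => ((v k : C) : ι → K)))
    (LinearMap.ker_eq_bot.2 (linearIndependent_iff_injective_fintypeLinearCombination.1 hli))
  have hgv : ∀ k l, ∑ i, g (Pi.single i 1) l * (v k : ι → K) i = if k = l then 1 else 0 := by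
    intro k l
    have h1 := LinearMap.congr_fun hg (Pi.single k 1)
    simp [Fintype.linearCombination_apply_single] at h1
    have h2 : g (v k : ι → K) = ∑ i, (v k : ι → K) i • g (Pi.single i 1) := by
      conv_lhs => rw [pi_eq_sum_univ' (v k : ι → K)]
      simp [map_sum]
    rw [h1] at h2
    have := congrFun h2 l
    simp [Finset.sum_apply, Pi.single_apply] at this
    simp_rw [mul_comm (g _ l)]
    rw [← this]; simp [eq_comm]
  let w : Fin (Module.finrank K C) → (ι → E) := fun k i => algebraMap K E ((v k : ι → K) i)
  have hw : LinearIndependent E w := by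
    rw [Fintype.linearIndependent_iff]
    intro c hc l
    have hc' : ∀ i, ∑ k, c k * algebraMap K E ((v k : ι → K) i) = 0 := by
      intro i
      have := congrFun hc i
      simpa [w, Finset.sum_apply] using this
    have : ∑ i, algebraMap K E (g (Pi.single i 1) l) * ∑ k, c k * algebraMap K E ((v k : ι → K) i) = c l := by
      simp_rw [Finset.mul_sum]
      rw [Finset.sum_comm]
      have : ∀ k, ∑ i, algebraMap K E (g (Pi.single i 1) l) * (c k * algebraMap K E ((v k : ι → K) i))
          = c k * algebraMap K E (if k = l then 1 else 0) := by
        intro k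
        rw [← hgv k l, map_sum, Finset.mul_sum]
        refine Finset.sum_congr rfl fun i _ => ?_
        rw [map_mul]; ring
      simp_rw [this]
      simp
    rw [← this]
    simp [hc']
  have hspan : Submodule.span E ((fun (f : ι → K) i => algebraMap K E (f i)) '' (C : Set (ι → K)))
      = Submodule.span E (Set.range w) := by
    apply le_antisymm
    · rw [Submodule.span_le]
      rintro _ ⟨f, hf, rfl⟩
      have h := v.sum_repr ⟨f, hf⟩
      have h' : ∑ k, v.repr ⟨f, hf⟩ k • (v k : ι → K) = f := by
        have := congrArg C.subtype h
        rw [map_sum] at this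
        exact this
      have : (fun i => algebraMap K E (f i)) = ∑ k, algebraMap K E (v.repr ⟨f, hf⟩ k) • w k := by
        ext i
        conv_lhs => rw [← h']
        simp [w, Finset.sum_apply, Algebra.smul_def]
      show (fun i => algebraMap K E (f i)) ∈ _
      rw [this]
      exact Submodule.sum_mem _ fun k _ => Submodule.smul_mem _ _ (Submodule.subset_span ⟨k, rfl⟩)
    · rw [Submodule.span_le]
      rintro _ ⟨k, rfl⟩
      exact Submodule.subset_span ⟨_, (v k).2, rfl⟩
  rw [hspan, finrank_span_eq_card hw, Fintype.card_fin]

/-- characters -/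
def chr {s : ℕ} {r : Fin s → ℕ} {E : Type*} [Field E] (α : Fin s → E) (j i : Idx r) : E :=
  ∏ k, α k ^ ((i k).val * (j k).val)

theorem chr_ne_zero {s : ℕ} {r : Fin s → ℕ} [∀ k, NeZero (r k)] {E : Type*} [Field E] {α : Fin s → E}
    (hα : ∀ k, IsPrimitiveRoot (α k) (r k)) (j i : Idx r) : chr α j i ≠ 0 :=
  Finset.prod_ne_zero_iff.2 fun k _ => pow_ne_zero _ ((hα k).ne_zero (NeZero.ne _))

theorem chr_add {s : ℕ} {r : Fin s → ℕ} [∀ k, NeZero (r k)] {E : Type*} [Field E] {α : Fin s → E}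
    (hα : ∀ k, IsPrimitiveRoot (α k) (r k)) (j u v : Idx r) :
    chr α j (u + v) = chr α j u * chr α j v := by
  unfold chr
  rw [← Finset.prod_mul_distrib]
  refine Finset.prod_congr rfl fun k _ => ?_
  rw [← pow_add, ← add_mul, pow_mul, pow_mul]
  congr 1
  rw [Pi.add_apply, ZMod.val_add]
  conv_rhs => rw [← Nat.div_add_mod ((u k).val + (v k).val) (r k)]
  rw [pow_add, pow_mul, (hα k).pow_eq_one, one_pow, one_mul]

theorem orth1 {r : ℕ} [NeZero r] {E : Type*} [Field E] {α : E}
    (hα : IsPrimitiveRoot α r) (j l : ZMod r) :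
    ∑ i : ZMod r, α ^ (i.val * j.val) * (α ^ (i.val * l.val))⁻¹ = if j = l then (r : E) else 0 := by
  have h0 : α ≠ 0 := hα.ne_zero (NeZero.ne _)
  split_ifs with h
  · subst h
    have : ∀ i : ZMod r, α ^ (i.val * j.val) * (α ^ (i.val * j.val))⁻¹ = 1 :=
      fun i => mul_inv_cancel₀ (pow_ne_zero _ h0)
    simp [this, ZMod.card]
  · set x : E := α ^ j.val * (α ^ l.val)⁻¹ with hx
    have h1 : ∀ i : ZMod r, α ^ (i.val * j.val) * (α ^ (i.val * l.val))⁻¹ = x ^ i.val := by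
      intro i
      rw [hx, mul_pow, inv_pow, ← pow_mul, ← pow_mul, mul_comm j.val, mul_comm l.val]
    have hx1 : x ≠ 1 := by
      intro hx1
      rw [hx, mul_inv_eq_one₀ (pow_ne_zero _ h0)] at hx1
      exact h (ZMod.val_injective r (hα.pow_inj (ZMod.val_lt j) (ZMod.val_lt l) hx1))
    have hxr : x ^ r = 1 := by
      rw [hx, mul_pow, inv_pow, pow_right_comm, pow_right_comm α l.val, hα.pow_eq_one]
      simp
    simp_rw [h1]
    have : ∑ i : ZMod r, x ^ i.val = ∑ i ∈ Finset.range r, x ^ i := by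
      refine Finset.sum_bij (fun i _ => i.val) (fun i _ => Finset.mem_range.2 (ZMod.val_lt i))
        (fun a _ b _ h => ZMod.val_injective r h) (fun b hb => ⟨(b : ZMod r), Finset.mem_univ _, ?_⟩)
        (fun _ _ => rfl)
      exact ZMod.val_cast_of_lt (Finset.mem_range.1 hb)
    rw [this, geom_sum_eq hx1, hxr]; simp

theorem orth {s : ℕ} {r : Fin s → ℕ} [∀ k, NeZero (r k)] {E : Type*} [Field E] {α : Fin s → E}
    (hα : ∀ k, IsPrimitiveRoot (α k) (r k)) (j l : Idx r) :
    ∑ i : Idx r, chr α j i * (chr α l i)⁻¹ = if j = l then ((∏ k, r k : ℕ) : E) else 0 := by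
  have h1 : ∀ i : Idx r, chr α j i * (chr α l i)⁻¹ =
      ∏ k, (α k ^ ((i k).val * (j k).val) * (α k ^ ((i k).val * (l k).val))⁻¹) := by
    intro i
    unfold chr
    rw [← Finset.prod_inv_distrib, ← Finset.prod_mul_distrib]
  simp_rw [h1]
  have h2 := Fintype.prod_sum (fun k (x : ZMod (r k)) =>
    (α k ^ (x.val * (j k).val) * (α k ^ (x.val * (l k).val))⁻¹))
  rw [← h2]
  simp_rw [orth1 (hα _)]
  split_ifs with h
  · subst h; simp
  · obtain ⟨k, hk⟩ := Function.ne_iff.1 h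
    exact Finset.prod_eq_zero (Finset.mem_univ k) (by simp [hk])

/-- Fourier transform over the big field -/
def fou {s : ℕ} {r : Fin s → ℕ} [∀ k, NeZero (r k)] {E : Type*} [Field E] (α : Fin s → E) :
    (Idx r → E) →ₗ[E] (Idx r → E) where
  toFun g j := ∑ i, g i * chr α j i
  map_add' f g := by ext j; simp [add_mul, Finset.sum_add_distrib]
  map_smul' c g := by ext j; simp [mul_assoc, Finset.mul_sum]

theorem fou_apply {s : ℕ} {r : Fin s → ℕ} [∀ k, NeZero (r k)] {E : Type*} [Field E] (α : Fin s → E)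
    (g : Idx r → E) (j : Idx r) : fou α g j = ∑ i, g i * chr α j i := rfl

theorem fourier_eq {s : ℕ} {r : Fin s → ℕ} [∀ k, NeZero (r k)] {K E : Type*} [Field K] [Field E]
    [Algebra K E] (α : Fin s → E) (f : Idx r → K) :
    fourier α f = fou α (fun i => algebraMap K E (f i)) := rfl

theorem fou_surj {s : ℕ} {r : Fin s → ℕ} [∀ k, NeZero (r k)] {E : Type*} [Field E] {α : Fin s → E}
    (hα : ∀ k, IsPrimitiveRoot (α k) (r k)) : Function.Surjective (fou (r := r) α) := by
  have hN : ((∏ k, r k : ℕ) : E) ≠ 0 := by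
    rw [Nat.cast_prod]
    exact Finset.prod_ne_zero_iff.2 fun k _ => (hα k).neZero'.out
  intro h
  refine ⟨fun i => ((∏ k, r k : ℕ) : E)⁻¹ * ∑ l, h l * (chr α l i)⁻¹, ?_⟩
  ext j
  rw [fou_apply]
  simp_rw [mul_assoc, Finset.sum_mul]
  rw [← Finset.mul_sum, Finset.sum_comm]
  have : ∀ l, ∑ i, h l * (chr α l i)⁻¹ * chr α j i = h l * if j = l then ((∏ k, r k : ℕ) : E) else 0 := by
    intro l
    rw [← orth hα, Finset.mul_sum]
    exact Finset.sum_congr rfl fun i _ => by ring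
  simp_rw [this]
  simp only [mul_ite, mul_zero, Finset.sum_ite_eq, Finset.mem_univ, if_true]
  field_simp

theorem fou_inj {s : ℕ} {r : Fin s → ℕ} [∀ k, NeZero (r k)] {E : Type*} [Field E] {α : Fin s → E}
    (hα : ∀ k, IsPrimitiveRoot (α k) (r k)) : Function.Injective (fou (r := r) α) :=
  LinearMap.injective_iff_surjective.2 (fou_surj hα)

theorem fou_conv {s : ℕ} {r : Fin s → ℕ} [∀ k, NeZero (r k)] {E : Type*} [Field E] {α : Fin s → E}
    (hα : ∀ k, IsPrimitiveRoot (α k) (r k)) (f g : Idx r → E) :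
    fou α (conv f g) = fou α f * fou α g := by
  ext j
  rw [Pi.mul_apply, fou_apply, fou_apply, fou_apply]
  simp_rw [conv, Finset.sum_mul]
  rw [Finset.sum_comm]
  refine Finset.sum_congr rfl fun u _ => ?_
  rw [Finset.mul_sum, ← Equiv.sum_comp (Equiv.addRight u)]
  refine Finset.sum_congr rfl fun v _ => ?_
  simp only [Equiv.coe_addRight, add_sub_cancel_right]
  rw [chr_add hα]; ring

/-- vanishing on D -/
def vanish {s : ℕ} {r : Fin s → ℕ} [∀ k, NeZero (r k)] {E : Type*} [Field E] (α : Fin s → E)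
    (D : Set (Idx r)) : Submodule E (Idx r → E) :=
  LinearMap.ker ((LinearMap.funLeft E E (Subtype.val : D → Idx r)).comp (fou α))

theorem mem_vanish {s : ℕ} {r : Fin s → ℕ} [∀ k, NeZero (r k)] {E : Type*} [Field E] (α : Fin s → E)
    (D : Set (Idx r)) (g) : g ∈ vanish α D ↔ ∀ a ∈ D, fou α g a = 0 := by
  simp [vanish, funext_iff, LinearMap.funLeft_apply]

theorem finrank_vanish {s : ℕ} {r : Fin s → ℕ} [∀ k, NeZero (r k)] {E : Type*} [Field E] {α : Fin s → E}
    (hα : ∀ k, IsPrimitiveRoot (α k) (r k)) (D : Set (Idx r)) :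
    Module.finrank E (vanish α D) + D.ncard = ∏ k, r k := by
  have h := LinearMap.finrank_range_add_finrank_ker
    ((LinearMap.funLeft E E (Subtype.val : D → Idx r)).comp (fou α))
  have hs : LinearMap.range ((LinearMap.funLeft E E (Subtype.val : D → Idx r)).comp (fou α)) = ⊤ := by
    rw [LinearMap.range_eq_top]
    exact (LinearMap.funLeft_surjective_of_injective E E _ Subtype.val_injective).comp (fou_surj hα)
  rw [hs, finrank_top] at h
  rw [Module.finrank_fintype_fun_eq_card, Module.finrank_fintype_fun_eq_card] at h
  rw [← Nat.card_coe_set_eq, Nat.card_eq_fintype_card, add_comm]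
  rw [Fintype.card_pi] at h
  simp only [ZMod.card] at h
  exact h

theorem ext_eq_vanish {s : ℕ} {r : Fin s → ℕ} [∀ k, NeZero (r k)] {K E : Type*} [Field K] [Field E]
    [Algebra K E] {α : Fin s → E} (hα : ∀ k, IsPrimitiveRoot (α k) (r k))
    (C : Submodule K (Idx r → K)) (hC : IsAbelianCode C) :
    Submodule.span E ((fun (f : Idx r → K) i => algebraMap K E (f i)) '' (C : Set (Idx r → K)))
      = vanish α (defSet r α C) := by
  set S := Submodule.span E ((fun (f : Idx r → K) i => algebraMap K E (f i)) '' (C : Set (Idx r → K))) with hS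
  have hN : ((∏ k, r k : ℕ) : E) ≠ 0 := by
    rw [Nat.cast_prod]
    exact Finset.prod_ne_zero_iff.2 fun k _ => (hα k).neZero'.out
  apply le_antisymm
  · rw [hS, Submodule.span_le]
    rintro _ ⟨f, hf, rfl⟩
    exact (mem_vanish _ _ _).2 fun a ha => ha f hf
  · have key : ∀ a, a ∉ defSet r α C → (fun i => (chr α a i)⁻¹) ∈ S := by
      intro a ha
      simp only [defSet, Set.mem_ofPred_eq, not_forall] at ha
      obtain ⟨f, hf, hfa⟩ := ha
      have h1 : (∑ u, (chr α a u)⁻¹ • (fun i => algebraMap K E (f (i - u)))) ∈ S :=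
        Submodule.sum_mem _ fun u _ => Submodule.smul_mem _ _ (Submodule.subset_span ⟨_, hC f hf u, rfl⟩)
      have h2 : (∑ u, (chr α a u)⁻¹ • (fun i => algebraMap K E (f (i - u))))
          = fourier α f a • (fun i => (chr α a i)⁻¹) := by
        ext i
        simp only [Finset.sum_apply, Pi.smul_apply, smul_eq_mul]
        rw [← (Equiv.subLeft i).sum_comp, fourier_eq, fou_apply, Finset.sum_mul]
        refine Finset.sum_congr rfl fun v _ => ?_
        simp only [Equiv.subLeft_apply, sub_sub_cancel]
        have h3 : chr α a i = chr α a (i - v) * chr α a v := by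
          rw [← chr_add hα, sub_add_cancel]
        rw [h3]
        have := chr_ne_zero hα a (i - v)
        have := chr_ne_zero hα a v
        field_simp
      rw [h2] at h1
      exact (Submodule.smul_mem_iff _ hfa).1 h1
    intro g hg
    rw [mem_vanish] at hg
    have hg2 : g = ∑ l, (((∏ k, r k : ℕ) : E)⁻¹ * fou α g l) • (fun i => (chr α l i)⁻¹) := by
      apply fou_inj hα
      ext j
      rw [map_sum, Finset.sum_apply]
      simp_rw [map_smul, Pi.smul_apply, smul_eq_mul]
      have : ∀ l, fou α (fun i => (chr α l i)⁻¹) j = if j = l then ((∏ k, r k : ℕ) : E) else 0 := by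
        intro l
        rw [← orth hα, fou_apply]
        exact Finset.sum_congr rfl fun i _ => mul_comm _ _
      simp_rw [this]
      simp only [mul_ite, mul_zero, Finset.sum_ite_eq, Finset.mem_univ, if_true]
      field_simp
    rw [hg2]
    refine Submodule.sum_mem _ fun l _ => ?_
    by_cases hl : l ∈ defSet r α C
    · rw [hg l hl]; simp
    · exact Submodule.smul_mem _ _ (key l hl)

theorem code_finrank {s : ℕ} {r : Fin s → ℕ} [∀ k, NeZero (r k)] {K E : Type*} [Field K] [Field E]
    [Algebra K E] {α : Fin s → E} (hα : ∀ k, IsPrimitiveRoot (α k) (r k))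
    (C : Submodule K (Idx r → K)) (hC : IsAbelianCode C) :
    Module.finrank K C + (defSet r α C).ncard = ∏ k, r k := by
  rw [← finrank_vanish hα, ← ext_eq_vanish hα C hC, aux_finrank_ext]

theorem code_mem {s : ℕ} {r : Fin s → ℕ} [∀ k, NeZero (r k)] {K E : Type*} [Field K] [Field E]
    [Algebra K E] {α : Fin s → E} (hα : ∀ k, IsPrimitiveRoot (α k) (r k))
    (C : Submodule K (Idx r → K)) (hC : IsAbelianCode C) (f : Idx r → K)
    (hf : ∀ a ∈ defSet r α C, fourier α f a = 0) : f ∈ C := by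
  have h1 : Submodule.span E ((fun (f : Idx r → K) i => algebraMap K E (f i)) ''
      ((C ⊔ Submodule.span K {f} : Submodule K (Idx r → K)) : Set (Idx r → K)))
      ≤ Submodule.span E ((fun (f : Idx r → K) i => algebraMap K E (f i)) '' (C : Set (Idx r → K))) := by
    rw [Submodule.span_le]
    rintro _ ⟨g, hg, rfl⟩
    obtain ⟨c, hc, d, hd, rfl⟩ := Submodule.mem_sup.1 hg
    obtain ⟨t, rfl⟩ := Submodule.mem_span_singleton.1 hd
    rw [SetLike.mem_coe, ext_eq_vanish hα C hC]
    have e1 : (fun i => algebraMap K E ((c + t • f) i)) =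
        (fun i => algebraMap K E (c i)) + algebraMap K E t • (fun i => algebraMap K E (f i)) := by
      ext i; simp [Algebra.smul_def]
    show (fun i => algebraMap K E ((c + t • f) i)) ∈ _
    rw [e1]
    refine Submodule.add_mem _ ((mem_vanish _ _ _).2 fun a ha => ha c hc)
      (Submodule.smul_mem _ _ ((mem_vanish _ _ _).2 hf))
  have h2 := Submodule.finrank_mono h1
  rw [aux_finrank_ext, aux_finrank_ext] at h2
  have h3 := Submodule.eq_of_le_of_finrank_le (le_sup_left : C ≤ C ⊔ Submodule.span K {f}) h2
  rw [h3]
  exact Submodule.mem_sup_right (Submodule.mem_span_singleton_self f)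

theorem le_apd {s : ℕ} {E : Type*} [Field E] {r : Fin (s+1) → ℕ} [∀ k, NeZero (r k)] (M : Idx r → E)
    (k : Fin (s+1)) (b : ZMod (r k)) :
    (runLen M k b + 1) * apd (fun j => r (k.succAbove j)) (hypercol M k b) ≤ apd r M := by
  have hb : ((b.val : ℕ) : ZMod (r k)) = b := ZMod.natCast_zmod_val b
  rw [apd]
  refine le_trans ?_ (Finset.le_sup (Finset.mem_univ k))
  refine le_trans ?_ (Finset.le_sup (Finset.mem_univ (⟨b.val, ZMod.val_lt b⟩ : Fin (r k))))
  simp only [hb]; exact le_rfl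

theorem apd_le {s : ℕ} {E : Type*} [Field E] {r : Fin (s+1) → ℕ} (M : Idx r → E) (d : ℕ)
    (h : ∀ k b, (runLen M k b + 1) * apd (fun j => r (k.succAbove j)) (hypercol M k b) ≤ d) :
    apd r M ≤ d := by
  rw [apd]
  exact Finset.sup_le fun k _ => Finset.sup_le fun b _ => h k _

theorem apd_zero_le {E : Type*} [Field E] {r : Fin 0 → ℕ} (M : Idx r → E) : apd r M ≤ 1 := by
  rw [apd]; split_ifs <;> simp

theorem apd_pos {s : ℕ} {E : Type*} [Field E] {r : Fin s → ℕ} [∀ k, NeZero (r k)] (M : Idx r → E)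
    (hM : M ≠ 0) : 1 ≤ apd r M := by
  induction s with
  | zero =>
    rw [apd, if_neg]
    intro h
    apply hM
    ext i
    rw [Subsingleton.elim i finZeroElim]; exact h
  | succ s ih =>
    obtain ⟨i, hi⟩ := Function.ne_iff.1 hM
    have h0 : hypercol M 0 (i 0) ≠ 0 := by
      apply Function.ne_iff.2
      refine ⟨Fin.removeNth 0 i, ?_⟩
      show M (Fin.insertNth 0 (i 0) (Fin.removeNth 0 i)) ≠ 0
      rw [Fin.insertNth_self_removeNth]; exact hi
    have h1 := ih (r := fun j => r ((0 : Fin (s+1)).succAbove j)) _ h0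
    refine le_trans ?_ (le_apd M 0 (i 0))
    exact Nat.mul_pos (Nat.succ_pos _) h1

theorem le_runLen {s : ℕ} {E : Type*} [Field E] {r : Fin (s+1) → ℕ} (M : Idx r → E)
    (k : Fin (s+1)) (b : ZMod (r k)) (t : ℕ) (ht : t < r k)
    (h : ∀ m ∈ Finset.Icc 1 t, hypercol M k (b + (m : ℕ)) = 0) : t ≤ runLen M k b := by
  unfold runLen
  calc t = (Finset.Icc 1 t).card := by simp
    _ ≤ _ := by
      apply Finset.card_le_card
      intro j hj
      rw [Finset.mem_Icc] at hj
      simp only [Finset.mem_filter, Finset.mem_Ico]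
      refine ⟨⟨hj.1, by omega⟩, fun m hm => h m ?_⟩
      rw [Finset.mem_Icc] at *; omega

theorem runLen_le {s : ℕ} {E : Type*} [Field E] {r : Fin (s+1) → ℕ} (M : Idx r → E)
    (k : Fin (s+1)) (b : ZMod (r k)) (t : ℕ) (ht : 1 ≤ t)
    (h : hypercol M k (b + (t : ℕ)) ≠ 0) : runLen M k b + 1 ≤ t := by
  have : runLen M k b ≤ (Finset.Ico 1 t).card := by
    unfold runLen
    apply Finset.card_le_card
    intro j hj
    simp only [Finset.mem_filter, Finset.mem_Ico] at hj ⊢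
    refine ⟨hj.1.1, ?_⟩
    by_contra hlt
    exact h (hj.2 t (Finset.mem_Icc.2 ⟨ht, by omega⟩))
  simp at this
  omega

theorem apd_lower {s : ℕ} {E : Type*} [Field E] {r : Fin (s+1) → ℕ} [∀ k, NeZero (r k)]
    (M : Idx r → E) (hM : M ≠ 0) (k : Fin (s+1)) (b δ : ℕ) (hδ1 : 2 ≤ δ) (hδ2 : δ ≤ r k)
    (h : ∀ i : Idx r, ∀ l < δ - 1, i k = ((b + l : ℕ) : ZMod (r k)) → M i = 0) : δ ≤ apd r M := by
  have hz : ∀ l < δ - 1, hypercol M k ((b + l : ℕ) : ZMod (r k)) = 0 := by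
    intro l hl
    ext i
    exact h _ l hl (by simp)
  have hex : ∃ m : ℕ, 1 ≤ m ∧ hypercol M k ((b : ZMod (r k)) - (m : ℕ)) ≠ 0 := by
    obtain ⟨i, hi⟩ := Function.ne_iff.1 hM
    have h0 : hypercol M k (i k) ≠ 0 := by
      apply Function.ne_iff.2
      refine ⟨Fin.removeNth k i, ?_⟩
      show M (Fin.insertNth k (i k) (Fin.removeNth k i)) ≠ 0
      rw [Fin.insertNth_self_removeNth]; exact hi
    refine ⟨((b : ZMod (r k)) - i k).val + r k, ?_, ?_⟩
    · omega
    · push_cast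
      rw [ZMod.natCast_zmod_val, ZMod.natCast_self]
      simpa using h0
  set m := Nat.find hex with hm
  obtain ⟨hm1, hm2⟩ := Nat.find_spec hex
  have hmin : ∀ m' < m, 1 ≤ m' → hypercol M k ((b : ZMod (r k)) - (m' : ℕ)) = 0 := by
    intro m' h1 h2
    have := Nat.find_min hex h1
    by_contra h3
    exact this ⟨h2, h3⟩
  have hrun : δ - 1 ≤ runLen M k ((b : ZMod (r k)) - (m : ℕ)) := by
    apply le_runLen _ _ _ _ (by omega)
    intro t ht
    rw [Finset.mem_Icc] at ht
    by_cases htm : t < m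
    · have := hmin (m - t) (by omega) (by omega)
      rw [Nat.cast_sub htm.le] at this
      convert this using 2
      ring
    · have := hz (t - m) (by omega)
      rw [Nat.cast_add, Nat.cast_sub (by omega)] at this
      convert this using 2
      ring
  refine le_trans ?_ (le_apd M k ((b : ZMod (r k)) - (m : ℕ)))
  have := apd_pos _ hm2
  calc δ ≤ (runLen M k ((b : ZMod (r k)) - (m : ℕ)) + 1) * 1 := by omega
    _ ≤ _ := Nat.mul_le_mul_left _ this

theorem gap {r : ℕ} [NeZero r] (S : Finset (ZMod r)) (δ : ℕ) (hδ : S.card < δ) (hδ2 : δ ≤ r) (b : ZMod r) :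
    ∃ t, 1 ≤ t ∧ t ≤ δ ∧ b + (t : ℕ) ∉ S := by
  by_contra hcon
  push Not at hcon
  have : ((Finset.Icc 1 δ).image (fun t : ℕ => b + (t : ZMod r))).card ≤ S.card := by
    apply Finset.card_le_card
    intro x hx
    obtain ⟨t, ht, rfl⟩ := Finset.mem_image.1 hx
    rw [Finset.mem_Icc] at ht
    exact hcon t ht.1 ht.2
  rw [Finset.card_image_of_injOn] at this
  · simp at this; omega
  · intro x hx y hy hxy
    simp only [Finset.coe_Icc, Set.mem_Icc] at hx hy
    have h1 : (x : ZMod r) = y := add_left_cancel hxy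
    rw [ZMod.natCast_eq_natCast_iff'] at h1
    have h2 : ((x - 1 : ℕ) : ZMod r) = ((y - 1 : ℕ) : ZMod r) := by
      rw [Nat.cast_sub hx.1, Nat.cast_sub hy.1, add_left_cancel hxy]
    rw [ZMod.natCast_eq_natCast_iff', Nat.mod_eq_of_lt (by omega), Nat.mod_eq_of_lt (by omega)] at h2
    omega

theorem apd_upper {E : Type*} [Field E] {r : Fin 2 → ℕ} [∀ k, NeZero (r k)]
    (S : Finset (ZMod (r 1))) (δ : ℕ) (hδ : S.card < δ) (hδ2 : δ ≤ r 1) (M : Idx r → E)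
    (hM : ∀ i, M i = 0 ↔ i 1 ∈ S) : apd r M ≤ δ := by
  have hc0 : ∀ b i, hypercol M 0 b i = 0 ↔ (i 0 : ZMod (r 1)) ∈ S := fun b i => hM _
  have hc1 : ∀ b i, hypercol M 1 b i = 0 ↔ b ∈ S := fun b i => hM _
  apply apd_le
  intro k b
  fin_cases k
  · have h1 : runLen M 0 b + 1 ≤ 1 := by
      apply runLen_le _ _ _ 1 le_rfl
      obtain ⟨t, -, -, ht⟩ := gap S δ hδ hδ2 0
      apply Function.ne_iff.2
      refine ⟨fun j => match j with | 0 => ((0 + (t : ZMod (r 1)) : ZMod (r 1))), ?_⟩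
      exact fun h => ht ((hc0 _ _).1 h)
    have h2 : apd (fun j => r ((0 : Fin 2).succAbove j)) (hypercol M 0 b) ≤ δ := by
      apply apd_le
      intro k c
      obtain rfl : k = 0 := Subsingleton.elim (α := Fin 1) _ _
      obtain ⟨t, ht1, ht2, ht⟩ := gap S δ hδ hδ2 c
      have h3 : runLen (hypercol M 0 b) 0 c + 1 ≤ t := by
        apply runLen_le _ _ _ t ht1
        apply Function.ne_iff.2
        refine ⟨fun x => x.elim0, ?_⟩
        exact fun h => ht ((hc0 _ _).1 h)
      have h4 := apd_zero_le (hypercol (hypercol M 0 b) 0 c)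
      calc _ ≤ t * 1 := Nat.mul_le_mul h3 h4
        _ ≤ δ := by omega
    calc _ ≤ 1 * δ := Nat.mul_le_mul h1 h2
      _ = δ := one_mul δ
  · obtain ⟨t, ht1, ht2, ht⟩ := gap S δ hδ hδ2 b
    have h1 : runLen M 1 b + 1 ≤ t := by
      apply runLen_le _ _ _ t ht1
      apply Function.ne_iff.2
      refine ⟨fun _ => 0, ?_⟩
      exact fun h => ht ((hc1 _ _).1 h)
    have h2 : apd (fun j => r ((1 : Fin 2).succAbove j)) (hypercol M 1 b) ≤ 1 := by
      apply apd_le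
      intro k c
      obtain rfl : k = 0 := Subsingleton.elim (α := Fin 1) _ _
      have h4 := apd_zero_le (hypercol (hypercol M 1 b) 0 c)
      by_cases hb : b ∈ S
      · have : apd (fun j => r ((1 : Fin 2).succAbove ((0 : Fin 1).succAbove j)))
            (hypercol (hypercol M 1 b) 0 c) = 0 := by
          rw [apd, if_pos]
          exact (hc1 _ _).2 hb
        rw [this]; simp
      · have h3 : runLen (hypercol M 1 b) 0 c + 1 ≤ 1 := by
          apply runLen_le _ _ _ 1 le_rfl
          apply Function.ne_iff.2
          refine ⟨fun x => x.elim0, ?_⟩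
          exact fun h => hb ((hc1 _ _).1 h)
        calc _ ≤ 1 * 1 := Nat.mul_le_mul h3 h4
          _ = 1 := rfl
    calc _ ≤ t * 1 := Nat.mul_le_mul h1 h2
      _ ≤ δ := by omega

theorem mem_bch {s : ℕ} (r : Fin s → ℕ) (q : ℕ) (k : Fin s) (hq : (q : ZMod (r k)) = 1)
    (δ b : Fin s → ℕ) (i : Idx r) :
    i ∈ bchDefSet r q {k} δ b ↔ ∃ l < δ k - 1, i k = ((b k + l : ℕ) : ZMod (r k)) := by
  simp only [bchDefSet, Set.mem_iUnion, Finset.mem_singleton, Finset.mem_range, exists_prop, qOrbit,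
    Set.mem_ofPred_eq]
  constructor
  · rintro ⟨k', rfl, l, hl, a, ha, n, hn⟩
    refine ⟨l, hl, ?_⟩
    rw [hn k', hq, one_pow, one_mul, ha]
  · rintro ⟨l, hl, h⟩
    exact ⟨k, rfl, l, hl, i, h, 0, fun k => by simp⟩

theorem exists_root {K E : Type*} [Field K] [Fintype K] [Field E] [Algebra K E] (r : ℕ) [NeZero r]
    (hr : r = Fintype.card K - 1) (α : E) (hα : IsPrimitiveRoot α r) :
    ∃ a : K, IsPrimitiveRoot a r ∧ algebraMap K E a = α := by
  obtain ⟨g, hg⟩ := IsCyclic.exists_ofOrder_eq_natCard (α := Kˣ)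
  rw [Nat.card_eq_fintype_card, Fintype.card_units, ← hr] at hg
  have h1 : IsPrimitiveRoot (g : K) r := by
    rw [← hg, ← orderOf_units]
    exact IsPrimitiveRoot.orderOf _
  have h2 := h1.map_of_injective (algebraMap K E).injective
  obtain ⟨m, -, hm⟩ := h2.eq_pow_of_pow_eq_one hα.pow_eq_one
  refine ⟨(g : K) ^ m, ?_, by rw [map_pow, hm]⟩
  apply IsPrimitiveRoot.of_map_of_injective (f := algebraMap K E) _ (algebraMap K E).injective
  rw [map_pow, hm]; exact hα

theorem card_S {r : ℕ} [NeZero r] (b δ : ℕ) (hδ2 : δ ≤ r) :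
    ((Finset.range (δ - 1)).image (fun l : ℕ => ((b + l : ℕ) : ZMod r))).card = δ - 1 := by
  rw [Finset.card_image_of_injOn, Finset.card_range]
  intro x hx y hy hxy
  simp only [Finset.coe_range, Set.mem_Iio] at hx hy
  simp only [Nat.cast_add, add_right_inj] at hxy
  rw [ZMod.natCast_eq_natCast_iff', Nat.mod_eq_of_lt (by omega), Nat.mod_eq_of_lt (by omega)] at hxy
  exact hxy

theorem exists_idem {K E : Type*} [Field K] [Field E] [Algebra K E] {r : Fin 2 → ℕ}
    [∀ k, NeZero (r k)] (α : Fin 2 → E) (a : K) (ha : IsPrimitiveRoot a (r 1))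
    (haα : algebraMap K E a = α 1) (S : Finset (ZMod (r 1))) :
    ∃ e : Idx r → K, ∀ j, fourier α e j = if j 1 ∈ S then 0 else 1 := by
  obtain ⟨c, hc⟩ := fou_surj (r := fun _ : Fin 1 => r 1) (α := fun _ => a) (fun _ => ha)
    (fun j => if j 0 ∈ S then 0 else 1)
  refine ⟨fun i => if i 0 = 0 then c (fun _ => i 1) else 0, fun j => ?_⟩
  have h1 := congrFun hc (fun _ => j 1)
  rw [fou_apply, ← Equiv.sum_comp (Equiv.funUnique (Fin 1) (ZMod (r 1))).symm] at h1
  simp only [chr, Finset.univ_unique, Finset.prod_singleton] at h1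
  have h2 := congrArg (algebraMap K E) h1
  rw [map_sum] at h2
  simp only [apply_ite (algebraMap K E), map_zero, map_one, map_mul, map_pow, haα] at h2
  rw [← h2]
  unfold fourier
  rw [← Equiv.sum_comp (piFinTwoEquiv (fun k => ZMod (r k))).symm, Fintype.sum_prod_type,
    Finset.sum_eq_single 0]
  · refine Finset.sum_congr rfl fun x _ => ?_
    simp only [Fin.prod_univ_two]
    simp
    exact Or.inl (congrArg c (funext fun k => by rw [Subsingleton.elim k default]; rfl))
  · intro x _ hx
    refine Finset.sum_eq_zero fun y _ => ?_
    simp [hx]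
  · simp

theorem main_aux
    {F : Type*} [Field F] [Fintype F]
    (L : Type*) [Field L] [Algebra F L]
    (rr : Fin 2 → ℕ) [∀ k, NeZero (rr k)] (δ b : ℕ)
    (hr : rr 1 = Fintype.card F - 1)
    (hδ1 : 2 ≤ δ) (hδ2 : δ ≤ rr 1)
    (αα : Fin 2 → L) (hprim : ∀ k, IsPrimitiveRoot (αα k) (rr k))
    (R : Submodule F (Idx (fun _ : Fin 1 => rr 1) → F)) (hR : IsAbelianCode R)
    (hRdef : defSet (fun _ : Fin 1 => rr 1) (fun _ => αα 1) R =
      bchDefSet (fun _ : Fin 1 => rr 1) (Fintype.card F) {0} (fun _ => δ) (fun _ => b))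
    (C : Submodule F (Idx rr → F))
    (hC : IsAbelianCode C)
    (hCdef : defSet rr αα C =
      bchDefSet rr (Fintype.card F) {1} (fun _ => δ) (fun _ => b)) :
    Module.finrank F C = (rr 1 - δ + 1) * rr 0 ∧
    Module.finrank F C = rr 0 * Module.finrank F R ∧
    dStarAlpha rr αα C = δ := by
  have hq : ((Fintype.card F : ℕ) : ZMod (rr 1)) = 1 := by
    have : Fintype.card F = rr 1 + 1 := by
      have := Fintype.card_pos (α := F); omega
    rw [this]; simp
  set S : Finset (ZMod (rr 1)) := (Finset.range (δ - 1)).image (fun l : ℕ => ((b + l : ℕ) : ZMod (rr 1))) with hS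
  have hcard : S.card = δ - 1 := card_S b δ hδ2
  have memS : ∀ x, x ∈ S ↔ ∃ l < δ - 1, x = ((b + l : ℕ) : ZMod (rr 1)) := by
    intro x; simp only [hS, Finset.mem_image, Finset.mem_range, eq_comm]
  have hDC : ∀ i : Idx rr, i ∈ defSet rr αα C ↔ i 1 ∈ S := by
    intro i
    rw [hCdef, mem_bch rr (Fintype.card F) 1 hq, memS]
  have hDR : ∀ i : Idx (fun _ : Fin 1 => rr 1), i ∈ defSet (fun _ : Fin 1 => rr 1) (fun _ => αα 1) R ↔ i 0 ∈ S := by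
    intro i
    rw [hRdef, mem_bch (fun _ : Fin 1 => rr 1) (Fintype.card F) 0 hq, memS]
  have cC : (defSet rr αα C).ncard = rr 0 * (δ - 1) := by
    have : defSet rr αα C = (piFinTwoEquiv (fun k => ZMod (rr k))).symm ''
        ((((Finset.univ : Finset (ZMod (rr 0))) ×ˢ S : Finset (ZMod (rr 0) × ZMod (rr 1)))) : Set (ZMod (rr 0) × ZMod (rr 1))) := by
      ext i
      rw [hDC, Equiv.image_eq_preimage_symm]
      simp [piFinTwoEquiv]
    rw [this, Set.ncard_image_of_injective _ (Equiv.injective _)]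
    rw [Set.ncard_coe_finset, Finset.card_product, hcard, Finset.card_univ, ZMod.card]
  have cR : (defSet (fun _ : Fin 1 => rr 1) (fun _ => αα 1) R).ncard = δ - 1 := by
    have : defSet (fun _ : Fin 1 => rr 1) (fun _ => αα 1) R =
        (Equiv.funUnique (Fin 1) (ZMod (rr 1))).symm '' (S : Set (ZMod (rr 1))) := by
      ext i
      rw [hDR, Equiv.image_eq_preimage_symm]
      simp
    rw [this, Set.ncard_image_of_injective _ (Equiv.injective _), Set.ncard_coe_finset, hcard]
  have fC := code_finrank hprim C hC
  have fR := code_finrank (r := fun _ : Fin 1 => rr 1) (α := fun _ => αα 1) (fun _ => hprim 1) R hR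
  rw [cC, Fin.prod_univ_two] at fC
  rw [cR, Fin.prod_univ_one] at fR
  have fR' : Module.finrank F R = rr 1 - δ + 1 := by omega
  have fC' : Module.finrank F C = (rr 1 - δ + 1) * rr 0 := by
    have h : rr 0 * rr 1 = (rr 1 - δ + 1) * rr 0 + rr 0 * (δ - 1) := by
      rw [mul_comm _ (rr 0), ← mul_add]; congr 1; omega
    omega
  refine ⟨fC', by rw [fC', fR', mul_comm], ?_⟩
  obtain ⟨a, ha, haα⟩ := exists_root (rr 1) hr (αα 1) (hprim 1)
  obtain ⟨e, he⟩ := exists_idem (r := rr) αα a ha haα S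
  have hlow : ∀ e ∈ C, e ≠ 0 → δ ≤ apd rr (fourier αα e) := by
    intro e heC he0
    refine apd_lower _ ?_ 1 b δ hδ1 hδ2 ?_
    · intro h0
      apply he0
      rw [fourier_eq] at h0
      have h1 := fou_inj hprim (h0.trans (map_zero _).symm)
      ext i
      have h2 := congrFun h1 i
      simpa using h2
    · intro i l hl hi
      have : i ∈ defSet rr αα C := (hDC i).2 ((memS _).2 ⟨l, hl, hi⟩)
      exact this e heC
  have heC : e ∈ C := code_mem hprim C hC e fun i hi => by
    rw [he, if_pos ((hDC i).1 hi)]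
  have he0 : e ≠ 0 := by
    rintro rfl
    obtain ⟨t, -, -, ht⟩ := gap S δ (by omega) hδ2 0
    have h1 := he (Function.update 0 1 (0 + (t : ZMod (rr 1))))
    rw [Function.update_self, if_neg ht] at h1
    simp [fourier] at h1
  have hconv : conv e e = e := by
    have h1 : fou αα (conv (fun i => algebraMap F L (e i)) (fun i => algebraMap F L (e i)))
        = fou αα (fun i => algebraMap F L (e i)) := by
      rw [fou_conv hprim, ← fourier_eq]
      ext j
      rw [Pi.mul_apply, he]
      split_ifs <;> simp
    have h2 := fou_inj hprim h1
    ext i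
    have h3 := congrFun h2 i
    apply (algebraMap F L).injective
    rw [← h3]
    simp [conv]
  have hup : apd rr (fourier αα e) ≤ δ := by
    refine apd_upper (r := rr) S δ (by omega) hδ2 _ fun i => ?_
    rw [he]
    split_ifs with h <;> simp [h]
  unfold dStarAlpha
  apply le_antisymm
  · refine le_trans (Nat.sInf_le ?_) hup
    exact ⟨e, heC, he0, hconv, rfl⟩
  · refine le_csInf ⟨_, e, heC, he0, hconv, rfl⟩ ?_
    rintro d ⟨f, hf, hf0, -, rfl⟩
    exact hlow f hf hf0

/-- Let `R = B_q(α,δ,b)` be a Reed–Solomon code of length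
`r = q − 1`.  Then for each `n` with `gcd(n,q) = 1` and each primitive `n`-th
root of unity `α'`, the multivariate BCH code `C = B_q((α',α),{2},{δ},{b})` in
`A_q(n,r)` satisfies `dim_{F_q}(C) = (r − δ + 1)·n = n·dim_{F_q}(R)` and
`d_{(α',α)}*(C) = δ`. -/
theorem reed_solomon_multiply_dimension
    {F : Type*} [Field F] [Fintype F]
    (L : Type*) [Field L] [Algebra F L]
    (n r δ b : ℕ) [NeZero n] [NeZero r]
    (hr : r = Fintype.card F - 1)
    (hδ1 : 2 ≤ δ) (hδ2 : δ ≤ r)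
    (hn : n.Coprime (Fintype.card F))
    (α : L) (hα : IsPrimitiveRoot α r)
    (α' : L) (hα' : IsPrimitiveRoot α' n)
    (R : Submodule F (Idx (fun _ : Fin 1 => r) → F)) (hR : IsAbelianCode R)
    (hRdef : defSet (fun _ : Fin 1 => r) (fun _ => α) R =
      bchDefSet (fun _ : Fin 1 => r) (Fintype.card F) {0} (fun _ => δ) (fun _ => b))
    [inst2 : ∀ k, NeZero ((Fin.cons n (fun _ : Fin 1 => r) : Fin 2 → ℕ) k)]
    (C : Submodule F (Idx (Fin.cons n (fun _ : Fin 1 => r) : Fin 2 → ℕ) → F))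
    (hC : IsAbelianCode C)
    (hCdef : defSet (Fin.cons n (fun _ : Fin 1 => r))
        (Fin.cons α' (fun _ : Fin 1 => α) : ∀ _ : Fin 2, L) C =
      bchDefSet (Fin.cons n (fun _ : Fin 1 => r)) (Fintype.card F)
        {1} (fun _ => δ) (fun _ => b)) :
    Module.finrank F C = (r - δ + 1) * n ∧
    Module.finrank F C = n * Module.finrank F R ∧
    dStarAlpha (Fin.cons n (fun _ : Fin 1 => r))
      (Fin.cons α' (fun _ : Fin 1 => α) : ∀ _ : Fin 2, L) C = δ := by
  refine main_aux L (Fin.cons n (fun _ : Fin 1 => r)) δ b hr hδ1 hδ2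
    (Fin.cons α' (fun _ : Fin 1 => α)) ?_ R hR hRdef C hC hCdef
  intro k
  fin_cases k
  · exact hα'
  · exact hα

end AbelianCodes
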